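/- The transition kernels f⁽¹'²⁾ of the 1/2-stable Biane process satisfy the Chapman–Kolmogorov equation: for 0 < t₁ < t₂ < t₃, y₁ > t₁²/4 and y₃ > t₃²/4, ∫_{t₂²/4}^∞ f⁽¹'²⁾_{t₁,t₂}(y₁,y₂) f⁽¹'²⁾_{t₂,t₃}(y₂,y₃) dy₂ = f⁽¹'²⁾_{t₁,t₃}(y₁,y₃). -/

import Mathlib

/-- Transition density f⁽¹ᐟ²⁾_{s,t}(u,v) of the 1/2-stable Biane process. -/
noncomputable def fHalf (s t u v : ℝ) : ℝ :=
  (t-s) * Real.sqrt (4*v - t^2) / (2*Real.pi * ((v-u)^2 - (t-s)*(s*v - t*u)))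

open MeasureTheory Filter Topology

/-- The Cauchy density with scale `c`, centred at the origin. -/
noncomputable def cauchyKernel (c x : ℝ) : ℝ := c / (Real.pi * (x ^ 2 + c ^ 2))

lemma cauchyKernel_neg (c x : ℝ) : cauchyKernel c (-x) = cauchyKernel c x := by
  simp [cauchyKernel]

lemma continuous_cauchyKernel {c : ℝ} (hc : 0 < c) : Continuous (cauchyKernel c) := by
  unfold cauchyKernel
  refine continuous_const.div (by fun_prop) fun x => ?_
  have := Real.pi_pos
  positivity

lemma integrable_cauchyKernel {c : ℝ} (hc : 0 < c) : Integrable (cauchyKernel c) := by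
  have h := (integrable_inv_one_add_sq.comp_div hc.ne').const_mul (1 / (Real.pi * c))
  refine h.congr (Eventually.of_forall fun x => ?_)
  have := Real.pi_pos
  simp only [cauchyKernel]
  field_simp
  ring

lemma cauchyKernel_nonneg {c : ℝ} (hc : 0 < c) (x : ℝ) : 0 ≤ cauchyKernel c x := by
  have := Real.pi_pos
  unfold cauchyKernel
  positivity

lemma cauchyKernel_le {c : ℝ} (hc : 0 < c) (x : ℝ) :
    cauchyKernel c x ≤ c / (Real.pi * c ^ 2) := by
  have := Real.pi_pos
  unfold cauchyKernel
  gcongr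
  nlinarith [sq_nonneg x]

lemma integrable_cauchyKernel_mul {c k : ℝ} (hc : 0 < c) (hk : 0 < k) (a b : ℝ) :
    Integrable fun x => cauchyKernel c (x - a) * cauchyKernel k (x - b) := by
  refine ((integrable_cauchyKernel hk).comp_sub_right b).bdd_mul
    (c := c / (Real.pi * c ^ 2)) ?_ ?_
  · exact ((continuous_cauchyKernel hc).comp (by fun_prop)).aestronglyMeasurable
  · refine Eventually.of_forall fun x => ?_
    rw [Real.norm_of_nonneg (cauchyKernel_nonneg hc _)]
    exact cauchyKernel_le hc _

lemma tendsto_quadratic_ratio {l : Filter ℝ} (hl : Tendsto (fun x : ℝ => x⁻¹) l (𝓝 0))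
    (h0 : ∀ᶠ x in l, x ≠ 0) (c m k : ℝ) :
    Tendsto (fun x : ℝ => (x ^ 2 + c ^ 2) / ((x - m) ^ 2 + k ^ 2)) l (𝓝 1) := by
  have h : Tendsto (fun x : ℝ => (1 + c ^ 2 * x⁻¹ ^ 2) / ((1 - m * x⁻¹) ^ 2 + k ^ 2 * x⁻¹ ^ 2)) l
      (𝓝 ((1 + c ^ 2 * 0 ^ 2) / ((1 - m * 0) ^ 2 + k ^ 2 * 0 ^ 2))) := by
    refine Tendsto.div (tendsto_const_nhds.add (tendsto_const_nhds.mul (hl.pow 2)))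
      (((tendsto_const_nhds.sub (tendsto_const_nhds.mul hl)).pow 2).add
        (tendsto_const_nhds.mul (hl.pow 2))) (by norm_num)
  have h1 : (1 + c ^ 2 * 0 ^ 2) / ((1 - m * 0) ^ 2 + k ^ 2 * 0 ^ 2) = (1 : ℝ) := by norm_num
  rw [h1] at h
  refine h.congr' ?_
  filter_upwards [h0] with x hx
  have e1 : 1 + c ^ 2 * x⁻¹ ^ 2 = (x ^ 2 + c ^ 2) / x ^ 2 := by field_simp
  have e2 : (1 - m * x⁻¹) ^ 2 + k ^ 2 * x⁻¹ ^ 2 = ((x - m) ^ 2 + k ^ 2) / x ^ 2 := by field_simp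
  rw [e1, e2, div_div_div_cancel_right₀ (pow_ne_zero 2 hx)]

lemma tendsto_log_sub_log {l : Filter ℝ} (hl : Tendsto (fun x : ℝ => x⁻¹) l (𝓝 0))
    (h0 : ∀ᶠ x in l, x ≠ 0) {c k : ℝ} (hc : 0 < c) (hk : 0 < k) (m : ℝ) :
    Tendsto (fun x : ℝ => Real.log (x ^ 2 + c ^ 2) - Real.log ((x - m) ^ 2 + k ^ 2)) l (𝓝 0) := by
  have h := (tendsto_quadratic_ratio hl h0 c m k).log one_ne_zero
  rw [Real.log_one] at h
  refine h.congr fun x => ?_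
  rw [Real.log_div (by positivity) (by positivity)]

lemma hasDerivAt_log_quadratic {k : ℝ} (hk : 0 < k) (m x : ℝ) :
    HasDerivAt (fun x : ℝ => Real.log ((x - m) ^ 2 + k ^ 2))
      (2 * (x - m) / ((x - m) ^ 2 + k ^ 2)) x := by
  have h := ((((hasDerivAt_id x).sub_const m).pow 2).add_const (k ^ 2)).log
    (by simp only [id, Pi.pow_apply]; positivity)
  simpa using h

lemma hasDerivAt_arctan_div {k : ℝ} (hk : 0 < k) (m x : ℝ) :
    HasDerivAt (fun x : ℝ => Real.arctan ((x - m) / k)) (k / ((x - m) ^ 2 + k ^ 2)) x := by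
  have h := (((hasDerivAt_id x).sub_const m).div_const k).arctan
  refine h.congr_deriv ?_
  simp only [id]
  field_simp
  ring

lemma tendsto_arctan_div_atTop {k : ℝ} (hk : 0 < k) (m : ℝ) :
    Tendsto (fun x : ℝ => Real.arctan ((x - m) / k)) atTop (𝓝 (Real.pi / 2)) :=
  (tendsto_nhds_of_tendsto_nhdsWithin Real.tendsto_arctan_atTop).comp
    ((tendsto_atTop_add_const_right _ (-m) tendsto_id).atTop_div_const hk)

lemma tendsto_arctan_div_atBot {k : ℝ} (hk : 0 < k) (m : ℝ) :
    Tendsto (fun x : ℝ => Real.arctan ((x - m) / k)) atBot (𝓝 (-(Real.pi / 2))) :=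
  (tendsto_nhds_of_tendsto_nhdsWithin Real.tendsto_arctan_atBot).comp
    ((tendsto_atBot_add_const_right _ (-m) tendsto_id).atBot_div_const hk)

lemma tendsto_div_sq_add_sq {l : Filter ℝ} (hl : Tendsto (fun x : ℝ => x⁻¹) l (𝓝 0))
    (h0 : ∀ᶠ x in l, x ≠ 0) (c : ℝ) :
    Tendsto (fun x : ℝ => x / (x ^ 2 + c ^ 2)) l (𝓝 0) := by
  have h := hl.mul (tendsto_quadratic_ratio hl h0 0 0 c)
  rw [zero_mul] at h
  refine h.congr' ?_
  filter_upwards [h0] with x hx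
  rw [sub_zero]
  field_simp
  ring

lemma integral_cauchyKernel_mul_self {c : ℝ} (hc : 0 < c) :
    ∫ x, cauchyKernel c x * cauchyKernel c x = cauchyKernel (c + c) 0 := by
  have hpi := Real.pi_pos
  have hint : Integrable fun x => cauchyKernel c x * cauchyKernel c x := by
    simpa using integrable_cauchyKernel_mul hc hc 0 0
  refine (integral_of_hasDerivAt_of_tendsto
    (f := fun x => (c * Real.arctan ((x - 0) / c) + c ^ 2 * (x / (x ^ 2 + c ^ 2)))
      * (1 / (2 * Real.pi ^ 2 * c ^ 2)))
    (m := (c * (-(Real.pi / 2)) + c ^ 2 * 0) * (1 / (2 * Real.pi ^ 2 * c ^ 2)))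
    (n := (c * (Real.pi / 2) + c ^ 2 * 0) * (1 / (2 * Real.pi ^ 2 * c ^ 2)))
    (fun x => ?_) hint ?_ ?_).trans ?_
  · have h1 := hasDerivAt_arctan_div hc 0 x
    have h2 : HasDerivAt (fun x : ℝ => x ^ 2 + c ^ 2) (2 * x) x := by
      simpa using (hasDerivAt_pow 2 x).add_const (c ^ 2)
    have h3 := (hasDerivAt_id' x).div h2 (by positivity)
    refine (((h1.const_mul c).add (h3.const_mul (c ^ 2))).mul_const _).congr_deriv ?_
    unfold cauchyKernel
    rw [sub_zero]
    field_simp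
    ring
  · exact (((tendsto_arctan_div_atBot hc 0).const_mul c).add
      ((tendsto_div_sq_add_sq tendsto_inv_atBot_zero (eventually_ne_atBot 0) c).const_mul
        (c ^ 2))).mul_const _
  · exact (((tendsto_arctan_div_atTop hc 0).const_mul c).add
      ((tendsto_div_sq_add_sq tendsto_inv_atTop_zero (eventually_ne_atTop 0) c).const_mul
        (c ^ 2))).mul_const _
  · unfold cauchyKernel
    field_simp
    ring

lemma integral_cauchyKernel_mul_of_ne {c k m : ℝ} (hc : 0 < c) (hk : 0 < k)
    (hne : m ≠ 0 ∨ c ≠ k) :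
    ∫ x, cauchyKernel c x * cauchyKernel k (x - m) = cauchyKernel (c + k) m := by
  have hpi := Real.pi_pos
  have hint : Integrable fun x => cauchyKernel c x * cauchyKernel k (x - m) := by
    simpa using integrable_cauchyKernel_mul hc hk 0 m
  have hD1 : 0 < m ^ 2 + (k - c) ^ 2 := by
    rcases hne with h | h
    · positivity
    · have : k - c ≠ 0 := sub_ne_zero.mpr h.symm
      positivity
  have hD2 : 0 < m ^ 2 + (k + c) ^ 2 := by positivity
  set q : ℝ := 1 / (Real.pi ^ 2 * ((m ^ 2 + (k - c) ^ 2) * (m ^ 2 + (k + c) ^ 2))) with hq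
  refine (integral_of_hasDerivAt_of_tendsto
    (f := fun x => (c * k * m * (Real.log (x ^ 2 + c ^ 2) - Real.log ((x - m) ^ 2 + k ^ 2))
      + k * (m ^ 2 + k ^ 2 - c ^ 2) * Real.arctan ((x - 0) / c)
      + c * (m ^ 2 + c ^ 2 - k ^ 2) * Real.arctan ((x - m) / k)) * q)
    (m := (c * k * m * 0 + k * (m ^ 2 + k ^ 2 - c ^ 2) * (-(Real.pi / 2))
      + c * (m ^ 2 + c ^ 2 - k ^ 2) * (-(Real.pi / 2))) * q)
    (n := (c * k * m * 0 + k * (m ^ 2 + k ^ 2 - c ^ 2) * (Real.pi / 2)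
      + c * (m ^ 2 + c ^ 2 - k ^ 2) * (Real.pi / 2)) * q)
    (fun x => ?_) hint ?_ ?_).trans ?_
  · have h0 := hasDerivAt_log_quadratic hc 0 x
    simp only [sub_zero] at h0
    have h1 := hasDerivAt_log_quadratic hk m x
    have h2 := hasDerivAt_arctan_div hc 0 x
    have h3 := hasDerivAt_arctan_div hk m x
    refine (((((h0.sub h1).const_mul (c * k * m)).add (h2.const_mul _)).add
      (h3.const_mul _)).mul_const q).congr_deriv ?_
    unfold cauchyKernel
    rw [hq, sub_zero]
    have hx1 : 0 < x ^ 2 + c ^ 2 := by positivity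
    have hx2 : 0 < (x - m) ^ 2 + k ^ 2 := by positivity
    field_simp
    ring
  · exact ((((tendsto_log_sub_log tendsto_inv_atBot_zero (eventually_ne_atBot 0) hc hk m).const_mul
      _).add ((tendsto_arctan_div_atBot hc 0).const_mul _)).add
      ((tendsto_arctan_div_atBot hk m).const_mul _)).mul_const q
  · exact ((((tendsto_log_sub_log tendsto_inv_atTop_zero (eventually_ne_atTop 0) hc hk m).const_mul
      _).add ((tendsto_arctan_div_atTop hc 0).const_mul _)).add
      ((tendsto_arctan_div_atTop hk m).const_mul _)).mul_const q
  · unfold cauchyKernel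
    rw [hq, add_comm c k]
    field_simp
    ring

/-- The Cauchy densities form a convolution semigroup. -/
theorem integral_cauchyKernel_mul {c k : ℝ} (hc : 0 < c) (hk : 0 < k) (a b : ℝ) :
    ∫ x, cauchyKernel c (x - a) * cauchyKernel k (x - b) = cauchyKernel (c + k) (b - a) := by
  have h : ∫ x, cauchyKernel c x * cauchyKernel k (x - (b - a)) = cauchyKernel (c + k) (b - a) := by
    by_cases hne : b - a ≠ 0 ∨ c ≠ k
    · exact integral_cauchyKernel_mul_of_ne hc hk hne
    · push Not at hne
      obtain ⟨h1, rfl⟩ := hne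
      simpa [h1] using integral_cauchyKernel_mul_self hc
  rw [← h, ← integral_sub_right_eq_self (fun x => cauchyKernel c x * cauchyKernel k (x - (b - a))) a]
  simp only [sub_sub, add_sub_cancel]

lemma integral_Ioi_cauchyKernel_reflected {c k : ℝ} (hc : 0 < c) (hk : 0 < k) (a b : ℝ) :
    ∫ x in Set.Ioi (0 : ℝ), (cauchyKernel c (x - a) - cauchyKernel c (x + a)) *
      (cauchyKernel k (x - b) - cauchyKernel k (x + b)) =
      cauchyKernel (c + k) (b - a) - cauchyKernel (c + k) (b + a) := by
  set g : ℝ → ℝ := fun x => (cauchyKernel c (x - a) - cauchyKernel c (x + a)) *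
      (cauchyKernel k (x - b) - cauchyKernel k (x + b)) with hg
  have heven : ∀ x, g |x| = g x := by
    intro x
    rcases abs_choice x with h | h
    · rw [h]
    · rw [h]
      simp only [hg]
      rw [← cauchyKernel_neg c (-x - a), ← cauchyKernel_neg c (-x + a),
        ← cauchyKernel_neg k (-x - b), ← cauchyKernel_neg k (-x + b)]
      ring_nf
  have habs := integral_comp_abs (f := g)
  simp only [heven] at habs
  have hexp : ∫ x, g x = 2 * (cauchyKernel (c + k) (b - a) - cauchyKernel (c + k) (b + a)) := by
    have i1 := integrable_cauchyKernel_mul hc hk a b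
    have i2 := integrable_cauchyKernel_mul hc hk a (-b)
    have i3 := integrable_cauchyKernel_mul hc hk (-a) b
    have i4 := integrable_cauchyKernel_mul hc hk (-a) (-b)
    have hfun : g = fun x => (cauchyKernel c (x - a) * cauchyKernel k (x - b)
        - cauchyKernel c (x - a) * cauchyKernel k (x - -b))
        - (cauchyKernel c (x - -a) * cauchyKernel k (x - b)
        - cauchyKernel c (x - -a) * cauchyKernel k (x - -b)) := by
      funext x
      simp only [hg, sub_neg_eq_add]
      ring
    have e := integral_sub (i1.sub i2) (i3.sub i4)
    simp only [Pi.sub_apply] at e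
    rw [hfun, e, integral_sub i1 i2, integral_sub i3 i4]
    simp only [integral_cauchyKernel_mul hc hk]
    rw [← cauchyKernel_neg _ (-b - a), ← cauchyKernel_neg _ (-b - -a)]
    ring_nf
  linarith

lemma fHalf_eq_cauchyKernel {s t a b : ℝ} (hst : s < t) (ha : 0 < a) (hb : 0 < b) :
    fHalf s t (s ^ 2 / 4 + a ^ 2) (t ^ 2 / 4 + b ^ 2) =
      (cauchyKernel ((t - s) / 2) (b - a) - cauchyKernel ((t - s) / 2) (b + a)) / (2 * a) := by
  have hpi := Real.pi_pos
  have hd : 0 < t - s := sub_pos.mpr hst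
  have hsqrt : Real.sqrt (4 * (t ^ 2 / 4 + b ^ 2) - t ^ 2) = 2 * b := by
    rw [show 4 * (t ^ 2 / 4 + b ^ 2) - t ^ 2 = (2 * b) ^ 2 by ring]
    exact Real.sqrt_sq (by positivity)
  have hden : (t ^ 2 / 4 + b ^ 2 - (s ^ 2 / 4 + a ^ 2)) ^ 2
      - (t - s) * (s * (t ^ 2 / 4 + b ^ 2) - t * (s ^ 2 / 4 + a ^ 2)) =
      ((b - a) ^ 2 + ((t - s) / 2) ^ 2) * ((b + a) ^ 2 + ((t - s) / 2) ^ 2) := by ring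
  unfold fHalf cauchyKernel
  rw [hsqrt, hden]
  generalize t - s = d at *
  have h1 : 0 < (b - a) ^ 2 + (d / 2) ^ 2 := by positivity
  have h2 : 0 < (b + a) ^ 2 + (d / 2) ^ 2 := by positivity
  rw [div_sub_div _ _ (by positivity) (by positivity), div_div,
    div_eq_div_iff (by positivity) (by positivity)]
  ring

lemma image_add_sq_Ioi (r : ℝ) : (fun x : ℝ => r + x ^ 2) '' Set.Ioi 0 = Set.Ioi r := by
  ext y
  simp only [Set.mem_image, Set.mem_Ioi]
  constructor
  · rintro ⟨x, hx, rfl⟩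
    exact lt_add_of_pos_right r (by positivity)
  · intro hy
    refine ⟨Real.sqrt (y - r), Real.sqrt_pos.mpr (sub_pos.mpr hy), ?_⟩
    rw [Real.sq_sqrt (sub_pos.mpr hy).le]
    ring

lemma integral_Ioi_comp_add_sq (r : ℝ) (g : ℝ → ℝ) :
    ∫ y in Set.Ioi r, g y = ∫ x in Set.Ioi (0 : ℝ), 2 * x * g (r + x ^ 2) := by
  rw [← image_add_sq_Ioi r]
  refine (integral_image_eq_integral_abs_deriv_smul measurableSet_Ioi
    (f' := fun x => 2 * x) (fun x _ => ?_) ?_ g).trans ?_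
  · simpa using ((hasDerivAt_pow 2 x).const_add r).hasDerivWithinAt
  · intro x hx y hy hxy
    exact (pow_left_inj₀ (le_of_lt hx) (le_of_lt hy) two_ne_zero).mp (add_left_cancel hxy)
  · refine setIntegral_congr_fun measurableSet_Ioi fun x hx => ?_
    have hx' : (0 : ℝ) < x := hx
    simp only [smul_eq_mul]
    rw [abs_of_pos (by positivity)]

theorem stmt17 (t₁ t₂ t₃ : ℝ) (ht₁ : 0 < t₁) (h12 : t₁ < t₂) (h23 : t₂ < t₃)
    (y₁ y₃ : ℝ) (hy₁ : t₁^2/4 < y₁) (hy₃ : t₃^2/4 < y₃) :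
    ∫ y₂ in Set.Ioi (t₂^2/4), fHalf t₁ t₂ y₁ y₂ * fHalf t₂ t₃ y₂ y₃
      = fHalf t₁ t₃ y₁ y₃ := by
  obtain ⟨a, ha, rfl⟩ : y₁ ∈ (fun x : ℝ => t₁ ^ 2 / 4 + x ^ 2) '' Set.Ioi 0 := by
    rwa [image_add_sq_Ioi]
  obtain ⟨b, hb, rfl⟩ : y₃ ∈ (fun x : ℝ => t₃ ^ 2 / 4 + x ^ 2) '' Set.Ioi 0 := by
    rwa [image_add_sq_Ioi]
  have ha' : 0 < a := ha
  have hb' : 0 < b := hb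
  rw [integral_Ioi_comp_add_sq, fHalf_eq_cauchyKernel (h12.trans h23) ha' hb',
    show (t₃ - t₁) / 2 = (t₂ - t₁) / 2 + (t₃ - t₂) / 2 by ring,
    ← integral_Ioi_cauchyKernel_reflected (half_pos (sub_pos.mpr h12))
      (half_pos (sub_pos.mpr h23)) a b, ← integral_div]
  refine setIntegral_congr_fun measurableSet_Ioi fun x hx => ?_
  have hx' : (0 : ℝ) < x := hx
  simp only
  rw [fHalf_eq_cauchyKernel h12 ha' hx', fHalf_eq_cauchyKernel h23 hx' hb',
    ← cauchyKernel_neg _ (b - x), neg_sub, add_comm b x]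
  field_simp
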